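/- For all nonnegative integers m, n and all z₁, z₂ ∈ ℂ, the partial Rodrigues formulae hold: H_{m,n}(z₁, z₂) = (−1)^m e^{z₁ z₂} (∂/∂z₂)^m (z₂^n e^{−z₁ z₂}) and H_{m,n}(z₁, z₂) = (−1)^n e^{z₁ z₂} (∂/∂z₁)^n (z₁^m e^{−z₁ z₂}), where the derivatives are iterated complex derivatives in the indicated variable with the other variable held fixed. -/

import Mathlib

/-!
Apply the Leibniz rule to `w ^ n * exp (-(a * w))`: the `k`-th derivative of `w ^ n` is
`k! * n.choose k * w ^ (n - k)`, and the `(m - k)`-th derivative of the exponential multiplies it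
by `(-a) ^ (m - k)`. After multiplication by `(-1) ^ m * exp (a * w)` the sign becomes `(-1) ^ k`
and the exponentials cancel, leaving the sum that defines `hermite2 m n a w`. This is the formula
in the second variable; the one in the first variable follows from the symmetry
`hermite2 m n z₁ z₂ = hermite2 n m z₂ z₁`.
-/

open Complex Finset

/-- The holomorphic Hermite polynomial in two variables. -/
noncomputable def hermite2 (m n : ℕ) (z₁ z₂ : ℂ) : ℂ :=
  ∑ k ∈ Finset.range (min m n + 1),
    (m.choose k : ℂ) * (n.choose k : ℂ) * (-1) ^ k * (Nat.factorial k : ℂ) *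
      z₁ ^ (m - k) * z₂ ^ (n - k)

theorem hermite2_symm (m n : ℕ) (z₁ z₂ : ℂ) : hermite2 m n z₁ z₂ = hermite2 n m z₂ z₁ := by
  unfold hermite2
  rw [min_comm]
  exact Finset.sum_congr rfl fun k _ => by ring

/-- The sum may run over all `k ≤ m`, the range in the Leibniz rule, because `n.choose k = 0`
for `k > n`. -/
theorem hermite2_eq_sum_range (m n : ℕ) (z₁ z₂ : ℂ) :
    hermite2 m n z₁ z₂ = ∑ k ∈ Finset.range (m + 1),
      (m.choose k : ℂ) * (n.choose k : ℂ) * (-1) ^ k * (Nat.factorial k : ℂ) *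
        z₁ ^ (m - k) * z₂ ^ (n - k) := by
  unfold hermite2
  apply Finset.sum_subset
  · intro k hk
    simp only [Finset.mem_range] at hk ⊢
    omega
  · intro k hk hk'
    simp only [Finset.mem_range] at hk hk'
    rw [Nat.choose_eq_zero_of_lt (show n < k by omega)]
    simp

theorem iteratedDeriv_pow_mul_exp (m n : ℕ) (a w : ℂ) :
    iteratedDeriv m (fun w => w ^ n * Complex.exp (-(a * w))) w =
      ∑ k ∈ Finset.range (m + 1), (m.choose k : ℂ) *
        ((n.descFactorial k : ℂ) * w ^ (n - k)) * ((-a) ^ (m - k) * Complex.exp (-(a * w))) := by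
  have hf : ContDiffAt ℂ m (fun w : ℂ => w ^ n) w := by fun_prop
  have hg : ContDiffAt ℂ m (fun w : ℂ => Complex.exp (-a * w)) w := by fun_prop
  have h := iteratedDeriv_mul hf hg
  simp only [iteratedDeriv_pow, iteratedDeriv_cexp_const_mul] at h
  simp only [neg_mul a] at h
  exact h

theorem hermite2_eq_iteratedDeriv_snd (m n : ℕ) (z₁ z₂ : ℂ) :
    hermite2 m n z₁ z₂ =
      (-1 : ℂ) ^ m * Complex.exp (z₁ * z₂) *
        iteratedDeriv m (fun w => w ^ n * Complex.exp (-(z₁ * w))) z₂ := by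
  rw [hermite2_eq_sum_range, iteratedDeriv_pow_mul_exp, Finset.mul_sum]
  refine Finset.sum_congr rfl fun k hk => ?_
  have hkm : k ≤ m := Nat.lt_succ_iff.mp (Finset.mem_range.mp hk)
  have hexp : Complex.exp (z₁ * z₂) * Complex.exp (-(z₁ * z₂)) = 1 := by
    rw [← Complex.exp_add, add_neg_cancel, Complex.exp_zero]
  have hsign : (-1 : ℂ) ^ m * (-z₁) ^ (m - k) = (-1) ^ k * z₁ ^ (m - k) := by
    obtain ⟨d, rfl⟩ := Nat.exists_eq_add_of_le hkm
    rw [Nat.add_sub_cancel_left, pow_add, mul_assoc, ← mul_pow, neg_one_mul, neg_neg]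
  rw [Nat.descFactorial_eq_factorial_mul_choose]
  push_cast
  linear_combination
    (-(m.choose k * (Nat.factorial k * n.choose k) * z₂ ^ (n - k)) : ℂ) *
      ((-1 : ℂ) ^ m * (-z₁) ^ (m - k) * hexp + hsign)

theorem partial_rodrigues_formulae (m n : ℕ) (z₁ z₂ : ℂ) :
    hermite2 m n z₁ z₂ =
      (-1 : ℂ) ^ m * Complex.exp (z₁ * z₂) *
        iteratedDeriv m (fun w => w ^ n * Complex.exp (-(z₁ * w))) z₂ ∧
    hermite2 m n z₁ z₂ =
      (-1 : ℂ) ^ n * Complex.exp (z₁ * z₂) *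
        iteratedDeriv n (fun w => w ^ m * Complex.exp (-(w * z₂))) z₁ := by
  refine ⟨hermite2_eq_iteratedDeriv_snd m n z₁ z₂, ?_⟩
  rw [hermite2_symm, hermite2_eq_iteratedDeriv_snd, mul_comm z₂ z₁]
  simp only [mul_comm z₂]
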